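/- arXiv:2103.10038 — 2 statements merged into one kernel-verified Lean document; each statement's English description precedes it below -/
import Mathlib

section
/- Let W be a ℂ-vector space, let a(z) = Σ_{n∈ℤ} aₙz^{−n−1} and b(z) = Σ_{n∈ℤ} bₙz^{−n−1} be fields on W, and let q(z) = (z−λ₁)^{k₁}⋯(z−λ_r)^{k_r} where λ₁, …, λ_r are distinct nonzero complex numbers and k₁, …, k_r are positive integers. Then q(z₁/z₂)·[a(z₁), b(z₂)] = 0 if and only if there exist fields A_{ij}(z) on W (1 ≤ i ≤ r, 0 ≤ j ≤ k_i−1) such that [a(z₁), b(z₂)] = Σ_{i=1}^r Σ_{j=0}^{k_i−1} A_{ij}(z₂) (p(z₂)∂/∂z₂)^{(j)} [ p̄(λ_i^{−1}z₁) δ(λ_i z₂/z₁) ]; moreover the A_{ij} are uniquely determined by this identity. -/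
/-!
A field on `W` is the same as a linear map `W → W((z))`, so the fields form a vector space `M`
over `K = ℂ((z))`, and the commutator `[a(z₁), b(z₂)]` is the sequence `D : ℤ → M` of its
coefficients of `z₁^{-m-1}`, with `z = z₂`. Multiplication by `z₁/z₂` becomes the twisted shift
`(T f)(m) = z⁻¹ f(m + 1)`, so locality says `q(T) D = 0`, and the kernel of `q(T)` is the direct
sum of the generalized eigenspaces `ker (T - λᵢ)^{kᵢ}`.

The eigenspace of `T` at `λ` consists of the multiples of the geometric sequence `(λz)^m`.
Therefore, if `e₀, e₁, …` are scalar sequences for which `(T - λ)^j eⱼ` is a nonzero `K`-multiple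
of `(λz)^m`, then every sequence in `ker (T - λ)^k` is uniquely `Σ_{j<k} eⱼ Aⱼ` with `Aⱼ ∈ M`, by
induction on `k`.

The coefficient sequences of `(p∂)^{(j)}[p̄(λ⁻¹z₁)δ(λz₂/z₁)]` are such `eⱼ`: for `j = 0` the
sequence is `λp (λz)^m`, and `[T, p∂] = p̄ T` gives
`[(T - λ)^{j+1}, p∂] = (j + 1) p̄ T (T - λ)^j`, so that each `p∂` multiplies the leading
coefficient by the nonzero factor `(j + 1) λ p̄`.
-/

noncomputable section

open HahnSeries

/-- Formal derivative `d/dx` on `ℂ((x))`. -/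
def lder (f : LaurentSeries ℂ) : LaurentSeries ℂ where
  coeff n := ((n + 1 : ℤ) : ℂ) * f.coeff (n + 1)
  isPWO_support' := by
    have hsub : (Function.support fun n : ℤ => ((n + 1 : ℤ) : ℂ) * f.coeff (n + 1)) ⊆
        (fun n : ℤ => n - 1) '' f.support := by
      intro n hn
      refine ⟨n + 1, ?_, by ring⟩
      have : f.coeff (n + 1) ≠ 0 := by
        intro h
        apply hn
        simp [Function.mem_support, h]
      simpa [HahnSeries.mem_support] using this
    exact (f.isPWO_support.image_of_monotone (fun a b hab => by simpa using hab)).mono hsub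

/-- The operator `p(x) d/dx` on `ℂ((x))`. -/
def pd (p : LaurentSeries ℂ) (f : LaurentSeries ℂ) : LaurentSeries ℂ := p * lder f

/-- The divided power `(p(x) d/dx)^{(k)} = (1/k!) (p(x)d/dx)^k`. -/
def pdPow (p : LaurentSeries ℂ) (k : ℕ) (f : LaurentSeries ℂ) : LaurentSeries ℂ :=
  ((k.factorial : ℂ))⁻¹ • (pd p)^[k] f

/-- The residue of a formal Laurent series: the coefficient of `x⁻¹`. -/
def lres (f : LaurentSeries ℂ) : ℂ := f.coeff (-1)

/-- The variable `x` of `ℂ((x))`. -/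
def lx : LaurentSeries ℂ := HahnSeries.single (1 : ℤ) (1 : ℂ)

open Polynomial in
/-- The polynomial `q(z) = (z−λ₁)^{k₁}⋯(z−λ_r)^{k_r}`. -/
def qpoly (r : ℕ) (lam : Fin r → ℂ) (k : Fin r → ℕ) : Polynomial ℂ :=
  ∏ i : Fin r, (Polynomial.X - Polynomial.C (lam i)) ^ (k i)

/-- A field on `W`: a series `a(z) = Σ aₙ z^{−n−1}` of endomorphisms such that
`aₙw = 0` for `n` sufficiently large, for every `w`. -/
def IsFieldOn (W : Type*) [AddCommGroup W] [Module ℂ W] (a : ℤ → Module.End ℂ W) : Prop :=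
  ∀ w : W, ∃ N : ℤ, ∀ n ≥ N, a n w = 0

/-- The coefficient of `z₁^m` in the formal distribution
`p̄(λ⁻¹z₁)δ(λz₂/z₁)` (where `p̄(x) = x⁻¹p(x)`), an element of `ℂ((z₂))`:
it equals `λ^{−m}·z₂^{−m}·p̄(z₂)`. -/
def pbarDeltaCoeff (p : LaurentSeries ℂ) (lam : ℂ) (m : ℤ) : LaurentSeries ℂ :=
  lam ^ (-m) • (HahnSeries.single (-m) (1 : ℂ) * (HahnSeries.single (-1 : ℤ) (1 : ℂ) * p))

/-- The identity
`[a(z₁),b(z₂)] = Σᵢ Σ_{j<kᵢ} A_{ij}(z₂)(p(z₂)∂/∂z₂)^{(j)}[p̄(λᵢ⁻¹z₁)δ(λᵢz₂/z₁)]`,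
written out on the coefficient of `z₁^{−m−1}z₂^{−n−1}` applied to `w ∈ W`:
the right-hand side `z₂`-coefficient is the (finite) convolution
`Σ_s ((p∂)^{(j)}[p̄δ]_λᵢ(−m−1))_s · (A_{ij})_{n+s} w`. -/
def CommutatorIdentity (W : Type*) [AddCommGroup W] [Module ℂ W]
    (p : LaurentSeries ℂ) (r : ℕ) (lam : Fin r → ℂ) (k : Fin r → ℕ)
    (a b : ℤ → Module.End ℂ W) (A : Fin r → ℕ → ℤ → Module.End ℂ W) : Prop :=
  ∀ (m n : ℤ) (w : W),
    (a m * b n - b n * a m) w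
      = ∑ i : Fin r, ∑ j ∈ Finset.range (k i),
          ∑ᶠ s : ℤ, ((pdPow p j (pbarDeltaCoeff p (lam i) (-m - 1))).coeff s) •
            (A i j (n + s)) w

/-! ### Jordan chains of the twisted shift -/

section TwistedShift

open Module

variable {K M : Type*} [Field K] [AddCommGroup M] [Module K M] {z μ : K}

/-- The twisted shift `T` on sequences in `M`. If `f` lists the coefficients of `z₁^{-m-1}` of a
distribution in `z₁` and `z₂ = z`, then `T f` is multiplication by `z₁/z₂`. -/
def twistedShift (M : Type*) [AddCommGroup M] [Module K M] (z : K) : End K (ℤ → M) :=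
  z⁻¹ • LinearMap.funLeft K M (· + 1)

/-- The operator `T - μ` for the twisted shift `T`. -/
abbrev twistedShiftSub (M : Type*) [AddCommGroup M] [Module K M] (z μ : K) : End K (ℤ → M) :=
  twistedShift M z - μ • 1

/-- The product of a scalar sequence and a vector, i.e. the map `K^ℤ ⊗ M → M^ℤ`. -/
def seqSMul : (ℤ → K) →ₗ[K] M →ₗ[K] ℤ → M :=
  LinearMap.mk₂ K (fun e x m => e m • x) (fun _ _ _ => funext fun _ => add_smul _ _ _)
    (fun _ _ _ => funext fun _ => mul_smul _ _ _) (fun _ _ _ => funext fun _ => smul_add _ _ _)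
    (fun _ _ _ => funext fun _ => smul_comm _ _ _)

/-- The geometric sequence with ratio `ρ`; for `ρ = λz₂` it lists the coefficients of
`z₁^{-m-1}` of `z₁⁻¹ δ(λz₂/z₁)`. -/
def geomSeq (ρ : K) : ℤ → K := fun m => ρ ^ m

lemma twistedShift_apply (f : ℤ → M) (m : ℤ) : twistedShift M z f m = z⁻¹ • f (m + 1) := rfl

lemma seqSMul_apply (e : ℤ → K) (x : M) (m : ℤ) : seqSMul e x m = e m • x := rfl

lemma twistedShift_pow_apply (t : ℕ) (f : ℤ → M) (m : ℤ) :
    (twistedShift M z ^ t) f m = z⁻¹ ^ t • f (m + t) := by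
  induction t generalizing f with
  | zero => simp
  | succ t ih =>
    rw [pow_succ, End.mul_apply, ih, twistedShift_apply, smul_smul, pow_succ, Nat.cast_succ,
      add_assoc]

lemma twistedShiftSub_pow_seqSMul (n : ℕ) (e : ℤ → K) (x : M) :
    (twistedShiftSub M z μ ^ n) (seqSMul e x) =
      seqSMul ((twistedShiftSub K z μ ^ n) e) x := by
  have h : twistedShiftSub M z μ ∘ₗ seqSMul.flip x =
      seqSMul.flip x ∘ₗ twistedShiftSub K z μ := by
    ext1 e
    ext m
    simp [twistedShift_apply, seqSMul_apply, mul_smul]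
  exact LinearMap.congr_fun (End.commute_pow_left_of_commute h n) e

lemma mem_eigenspace_twistedShift_iff (hz : z ≠ 0) {f : ℤ → M} :
    f ∈ (twistedShift M z).eigenspace μ ↔ ∀ m, f (m + 1) = (μ * z) • f m := by
  simp_rw [End.mem_eigenspace_iff, funext_iff, twistedShift_apply, Pi.smul_apply,
    inv_smul_eq_iff₀ hz, smul_smul, mul_comm z]

lemma geomSeq_mem_eigenspace (hz : z ≠ 0) (hμ : μ ≠ 0) :
    geomSeq (μ * z) ∈ (twistedShift K z).eigenspace μ :=
  (mem_eigenspace_twistedShift_iff hz).2 fun m => by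
    rw [geomSeq, geomSeq, zpow_add_one₀ (mul_ne_zero hμ hz), smul_eq_mul, mul_comm]

lemma eq_seqSMul_geomSeq_of_mem_eigenspace (hz : z ≠ 0) (hμ : μ ≠ 0) {f : ℤ → M}
    (hf : f ∈ (twistedShift M z).eigenspace μ) : f = seqSMul (geomSeq (μ * z)) (f 0) := by
  have hρ : μ * z ≠ 0 := mul_ne_zero hμ hz
  rw [mem_eigenspace_twistedShift_iff hz] at hf
  ext m
  rw [seqSMul_apply, geomSeq]
  induction m using Int.induction_on with
  | zero => simp
  | succ n ih => rw [hf, ih, smul_smul, zpow_add_one₀ hρ, mul_comm]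
  | pred n ih =>
    rw [zpow_sub_one₀ hρ, mul_comm, mul_smul, ← ih, eq_inv_smul_iff₀ hρ, ← hf, sub_add_cancel]

lemma twistedShiftSub_pow_succ_of_commutator (hz : z ≠ 0) (hμ : μ ≠ 0) {δ : (ℤ → K) → ℤ → K}
    {c : K} (hδ₀ : δ 0 = 0)
    (hδ : ∀ f, twistedShiftSub K z μ (δ f) = δ (twistedShiftSub K z μ f) + c • twistedShift K z f)
    {j : ℕ} {b : K} {f : ℤ → K} (hf : (twistedShiftSub K z μ ^ j) f = b • geomSeq (μ * z)) :
    (twistedShiftSub K z μ ^ (j + 1)) (δ f) = ((j + 1) * c * μ * b) • geomSeq (μ * z) := by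
  set T := twistedShift K z
  set S := twistedShiftSub K z μ
  set g := geomSeq (μ * z)
  have hTg : T g = μ • g := End.mem_eigenspace_iff.1 (geomSeq_mem_eigenspace hz hμ)
  have hST : Commute S T := (Commute.refl T).sub_left ((Commute.one_left T).smul_left μ)
  induction j generalizing f b with
  | zero =>
    obtain rfl : f = b • g := hf
    have hSg : S g = 0 := sub_eq_zero.2 hTg
    rw [zero_add, pow_one, hδ, map_smul, map_smul, hSg, smul_zero, hδ₀, hTg, zero_add, smul_smul,
      smul_smul]
    congr 1
    push_cast
    ring
  | succ j ih =>
    have hSTf : (S ^ (j + 1)) (T f) = T ((S ^ (j + 1)) f) :=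
      LinearMap.congr_fun (hST.pow_left (j + 1)).eq f
    rw [pow_succ, End.mul_apply, hδ, map_add, ih (f := S f) hf, map_smul, hSTf, hf, map_smul,
      hTg, smul_smul, smul_smul, ← add_smul]
    congr 1
    push_cast
    ring

/-- A Jordan chain of the twisted shift at the eigenvalue `μ`, up to lower terms and scalars:
`e j` is a generalized eigenvector of order exactly `j + 1`. -/
def IsJordanChain (z μ : K) (e : ℕ → ℤ → K) : Prop :=
  ∀ j, ∃ c : K, c ≠ 0 ∧ (twistedShiftSub K z μ ^ j) (e j) = c • geomSeq (μ * z)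

lemma isJordanChain_of_commutator [CharZero K] (hz : z ≠ 0) (hμ : μ ≠ 0)
    {δ : (ℤ → K) → ℤ → K} {c : K} (hc : c ≠ 0) (hδ₀ : δ 0 = 0)
    (hδ : ∀ f, twistedShiftSub K z μ (δ f) = δ (twistedShiftSub K z μ f) + c • twistedShift K z f)
    {e : ℕ → ℤ → K} {b : K} (hb : b ≠ 0) (he₀ : e 0 = b • geomSeq (μ * z)) {s : ℕ → K}
    (hs : ∀ j, s j ≠ 0) (he : ∀ j, e (j + 1) = s j • δ (e j)) : IsJordanChain z μ e := by
  intro j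
  induction j with
  | zero => exact ⟨b, hb, he₀⟩
  | succ j ih =>
    obtain ⟨b', hb', hej⟩ := ih
    refine ⟨s j * ((j + 1) * c * μ * b'), ?_, ?_⟩
    · have hj := hs j
      have : (j + 1 : K) ≠ 0 := j.cast_add_one_ne_zero
      positivity
    · rw [he, map_smul, twistedShiftSub_pow_succ_of_commutator hz hμ hδ₀ hδ hej, smul_smul]

namespace IsJordanChain

variable {e : ℕ → ℤ → K}

lemma seqSMul_mem_genEigenspace (he : IsJordanChain z μ e) (hz : z ≠ 0) (hμ : μ ≠ 0) {j k : ℕ}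
    (hjk : j < k) (x : M) : seqSMul (e j) x ∈ (twistedShift M z).genEigenspace μ k := by
  obtain ⟨c, -, hc⟩ := he j
  refine (End.genEigenspace _ μ).monotone (Nat.cast_le.2 (Nat.succ_le_of_lt hjk)) ?_
  have hgeom := End.mem_eigenspace_iff.1 (geomSeq_mem_eigenspace hz hμ)
  rw [End.mem_genEigenspace_nat, LinearMap.mem_ker, twistedShiftSub_pow_seqSMul, pow_succ',
    End.mul_apply, hc]
  simp [hgeom]

/-- Subtracting from `f` the multiple of `e (k - 1)` with the same image under `(T - μ)^(k - 1)`
lowers the order of `f`. -/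
lemma exists_sum_eq (he : IsJordanChain z μ e) (hz : z ≠ 0) (hμ : μ ≠ 0) {k : ℕ} {f : ℤ → M}
    (hf : f ∈ (twistedShift M z).genEigenspace μ k) :
    ∃ A : ℕ → M, ∑ j ∈ Finset.range k, seqSMul (e j) (A j) = f := by
  induction k generalizing f with
  | zero => exact ⟨0, by simpa [eq_comm] using hf⟩
  | succ k ih =>
    obtain ⟨c, hc, hek⟩ := he k
    set S := twistedShiftSub M z μ with hS
    have htop : (S ^ k) f = seqSMul (geomSeq (μ * z)) ((S ^ k) f 0) := by
      refine eq_seqSMul_geomSeq_of_mem_eigenspace hz hμ ?_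
      rw [End.mem_eigenspace_iff, ← sub_eq_zero]
      simpa [pow_succ', End.mul_apply, hS] using End.mem_genEigenspace_nat.1 hf
    set x := c⁻¹ • (S ^ k) f 0
    obtain ⟨A, hA⟩ := ih (f := f - seqSMul (e k) x) <| by
      rw [End.mem_genEigenspace_nat, LinearMap.mem_ker, map_sub, sub_eq_zero,
        twistedShiftSub_pow_seqSMul, hek, map_smul, ← LinearMap.map_smul₂, inv_smul_smul₀ hc,
        ← htop]
    refine ⟨Function.update A k x, ?_⟩
    rw [Finset.sum_range_succ, Function.update_self, ← eq_sub_iff_add_eq, ← hA]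
    refine Finset.sum_congr rfl fun j hj => ?_
    rw [Function.update_of_ne (Finset.mem_range.1 hj).ne]

lemma sum_mem_genEigenspace (he : IsJordanChain z μ e) (hz : z ≠ 0) (hμ : μ ≠ 0) (k : ℕ)
    (A : ℕ → M) :
    ∑ j ∈ Finset.range k, seqSMul (e j) (A j) ∈ (twistedShift M z).genEigenspace μ k :=
  sum_mem fun _ hj => he.seqSMul_mem_genEigenspace hz hμ (Finset.mem_range.1 hj) _

/-- Applying `(T - μ)^(k - 1)` isolates the last coefficient. -/
lemma eq_of_sum_eq (he : IsJordanChain z μ e) (hz : z ≠ 0) (hμ : μ ≠ 0) {k : ℕ} {A A' : ℕ → M}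
    (hA : ∑ j ∈ Finset.range k, seqSMul (e j) (A j) =
      ∑ j ∈ Finset.range k, seqSMul (e j) (A' j)) : ∀ j < k, A j = A' j := by
  induction k with
  | zero => simp
  | succ k ih =>
    obtain ⟨c, hc, hek⟩ := he k
    have hlower (B : ℕ → M) : (twistedShiftSub M z μ ^ k)
        (∑ j ∈ Finset.range k, seqSMul (e j) (B j)) = 0 :=
      End.mem_genEigenspace_nat.1 (he.sum_mem_genEigenspace hz hμ k B)
    rw [Finset.sum_range_succ, Finset.sum_range_succ] at hA
    have htop : A k = A' k := by
      have h := congrFun (congrArg (twistedShiftSub M z μ ^ k) hA) 0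
      simpa only [map_add, hlower, twistedShiftSub_pow_seqSMul, hek, zero_add, seqSMul_apply,
        Pi.smul_apply, geomSeq, zpow_zero, smul_eq_mul, mul_one, smul_right_inj hc] using h
    rw [htop, add_left_inj] at hA
    exact fun j hj => (Nat.lt_succ_iff_lt_or_eq.1 hj).elim (ih hA j) (· ▸ htop)

end IsJordanChain

/-! ### Kernels of products of linear factors -/

lemma ker_aeval_prod_X_sub_C_pow {ι : Type*} (T : End K M) (s : Finset ι) {μ : ι → K}
    (hμ : Set.InjOn μ s) (k : ι → ℕ) :
    LinearMap.ker (Polynomial.aeval T (∏ i ∈ s, (Polynomial.X - Polynomial.C (μ i)) ^ k i)) =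
      ⨆ i ∈ s, T.genEigenspace (μ i) (k i) := by
  classical
  induction s using Finset.induction_on with
  | empty => simp [End.one_eq_id]
  | insert i s hi ih =>
    have hcop : IsCoprime ((Polynomial.X - Polynomial.C (μ i)) ^ k i)
        (∏ j ∈ s, (Polynomial.X - Polynomial.C (μ j)) ^ k j) := by
      refine IsCoprime.prod_right fun j hj => (Polynomial.isCoprime_X_sub_C_of_isUnit_sub ?_).pow
      rw [isUnit_iff_ne_zero, sub_ne_zero]
      intro hij
      exact hi (hμ (by simp) (by simp [hj]) hij ▸ hj)
    rw [Finset.prod_insert hi, Finset.iSup_insert,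
      ← Polynomial.sup_ker_aeval_eq_ker_aeval_mul_of_coprime T hcop,
      ih (hμ.mono (by simp)), End.genEigenspace_nat]
    simp [Algebra.algebraMap_eq_smul_one]

variable {ι : Type*} [Fintype ι] {μ : ι → K} {k : ι → ℕ} {e : ι → ℕ → ℤ → K}

theorem aeval_twistedShift_eq_zero_iff (hz : z ≠ 0) (hμ : ∀ i, μ i ≠ 0)
    (hinj : Function.Injective μ) (he : ∀ i, IsJordanChain z (μ i) (e i)) {f : ℤ → M} :
    Polynomial.aeval (twistedShift M z)
        (∏ i, (Polynomial.X - Polynomial.C (μ i)) ^ k i) f = 0 ↔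
      ∃ A : ι → ℕ → M, ∑ i, ∑ j ∈ Finset.range (k i), seqSMul (e i j) (A i j) = f := by
  rw [← LinearMap.mem_ker, ker_aeval_prod_X_sub_C_pow _ _ hinj.injOn,
    Submodule.mem_iSup_finset_iff_exists_sum]
  constructor
  · rintro ⟨g, rfl⟩
    choose A hA using fun i => (he i).exists_sum_eq hz (hμ i) (g i).2
    exact ⟨A, Finset.sum_congr rfl fun i _ => hA i⟩
  · rintro ⟨A, rfl⟩
    exact ⟨fun i => ⟨_, (he i).sum_mem_genEigenspace hz (hμ i) (k i) (A i)⟩, rfl⟩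

theorem eq_of_sum_seqSMul_eq (hz : z ≠ 0) (hμ : ∀ i, μ i ≠ 0) (hinj : Function.Injective μ)
    (he : ∀ i, IsJordanChain z (μ i) (e i)) {A A' : ι → ℕ → M}
    (h : ∑ i, ∑ j ∈ Finset.range (k i), seqSMul (e i j) (A i j) =
      ∑ i, ∑ j ∈ Finset.range (k i), seqSMul (e i j) (A' i j)) :
    ∀ i, ∀ j < k i, A i j = A' i j := by
  have hmem (B : ι → ℕ → M) (i : ι) : ∑ j ∈ Finset.range (k i), seqSMul (e i j) (B i j) ∈
      (twistedShift M z).maxGenEigenspace (μ i) :=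
    ((twistedShift M z).genEigenspace (μ i)).monotone le_top
      ((he i).sum_mem_genEigenspace hz (hμ i) (k i) (B i))
  have hindep := (iSupIndep_iff_finsetSum_eq_imp_eq _).1
    ((twistedShift M z).independent_maxGenEigenspace.comp hinj)
  exact fun i => (he i).eq_of_sum_eq hz (hμ i) <|
    hindep Finset.univ _ _ (fun i _ => ⟨hmem A i, hmem A' i⟩) h i (Finset.mem_univ i)

end TwistedShift

/-! ### Derivatives of the delta function -/

section DeltaSeq

variable (p : LaurentSeries ℂ) {l : ℂ}

lemma lx_ne_zero : lx ≠ 0 := HahnSeries.single_ne_zero one_ne_zero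

lemma lx_inv : lx⁻¹ = HahnSeries.single (-1 : ℤ) (1 : ℂ) := by
  rw [lx, HahnSeries.inv_single, inv_one]

lemma lder_eq_derivative (f : LaurentSeries ℂ) : lder f = LaurentSeries.derivative ℂ f := by
  ext n
  simp [lder, LaurentSeries.derivative_apply]

lemma lder_lx_inv_mul (f : LaurentSeries ℂ) :
    lder (lx⁻¹ * f) = lx⁻¹ * (lder f - lx⁻¹ * f) := by
  have hcoeff (g : LaurentSeries ℂ) (n : ℤ) : (lx⁻¹ * g).coeff n = g.coeff (n + 1) := by
    simpa [lx_inv] using HahnSeries.coeff_single_mul_add (r := (1 : ℂ)) (x := g) (a := n + 1)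
      (b := -1)
  ext n
  simp only [lder, hcoeff, HahnSeries.coeff_sub]
  push_cast
  ring

lemma pd_sub (f g : LaurentSeries ℂ) : pd p (f - g) = pd p f - pd p g := by
  simp only [pd, lder_eq_derivative, map_sub, mul_sub]

lemma pd_C_mul (c : ℂ) (f : LaurentSeries ℂ) :
    pd p (HahnSeries.C c * f) = HahnSeries.C c * pd p f := by
  rw [pd, pd, lder_eq_derivative, lder_eq_derivative, HahnSeries.C_mul_eq_smul, map_smul,
    ← HahnSeries.C_mul_eq_smul, mul_left_comm]

lemma pd_lx_inv_mul (f : LaurentSeries ℂ) :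
    pd p (lx⁻¹ * f) = lx⁻¹ * pd p f - lx⁻¹ * p * (lx⁻¹ * f) := by
  rw [pd, pd, lder_lx_inv_mul]
  ring

lemma twistedShiftSub_pd_comp (f : ℤ → LaurentSeries ℂ) :
    twistedShiftSub (LaurentSeries ℂ) lx (HahnSeries.C l) (pd p ∘ f) =
      pd p ∘ twistedShiftSub (LaurentSeries ℂ) lx (HahnSeries.C l) f +
        (lx⁻¹ * p) • twistedShift (LaurentSeries ℂ) lx f := by
  ext1 m
  simp only [LinearMap.sub_apply, LinearMap.smul_apply, Module.End.one_apply, Pi.sub_apply,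
    Pi.add_apply, Pi.smul_apply, Function.comp_apply, smul_eq_mul, twistedShift_apply, pd_sub,
    pd_C_mul, pd_lx_inv_mul]
  ring

/-- The sequence, in `m`, of the coefficients of `z₁^{-m-1}` in
`(p(z₂)∂/∂z₂)^{(j)}[p̄(λ⁻¹z₁)δ(λz₂/z₁)]`. -/
def deltaSeq (p : LaurentSeries ℂ) (l : ℂ) (j : ℕ) : ℤ → LaurentSeries ℂ :=
  fun m => pdPow p j (pbarDeltaCoeff p l (-m - 1))

lemma deltaSeq_zero (hl : l ≠ 0) :
    deltaSeq p l 0 = (HahnSeries.C l * p) • geomSeq (HahnSeries.C l * lx) := by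
  ext1 m
  have hlx : HahnSeries.single (-(-m - 1)) (1 : ℂ) = lx ^ (m + 1) := by
    rw [neg_sub, sub_neg_eq_add, add_comm]
    exact RatFunc.single_zpow (m + 1)
  have hC : HahnSeries.C l ≠ (0 : LaurentSeries ℂ) := (map_ne_zero _).2 hl
  have := lx_ne_zero
  simp only [deltaSeq, pdPow, Nat.factorial_zero, Nat.cast_one, inv_one, one_smul,
    Function.iterate_zero_apply, pbarDeltaCoeff, hlx, ← lx_inv, ← HahnSeries.C_mul_eq_smul,
    Pi.smul_apply, geomSeq, smul_eq_mul, map_zpow₀]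
  rw [neg_sub, sub_neg_eq_add, add_comm, mul_zpow, zpow_add_one₀ hC, zpow_add_one₀ lx_ne_zero]
  field_simp

lemma deltaSeq_succ (j : ℕ) :
    deltaSeq p l (j + 1) =
      (HahnSeries.C ((j : ℂ) + 1)⁻¹ : LaurentSeries ℂ) • (pd p ∘ deltaSeq p l j) := by
  ext1 m
  simp only [deltaSeq, pdPow, Function.iterate_succ_apply', Nat.factorial_succ, Pi.smul_apply,
    Function.comp_apply, smul_eq_mul, ← HahnSeries.C_mul_eq_smul, pd_C_mul]
  rw [← mul_assoc, ← map_mul, ← mul_inv, Nat.cast_mul, Nat.cast_succ]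

theorem isJordanChain_deltaSeq (hp : p ≠ 0) (hl : l ≠ 0) :
    IsJordanChain lx (HahnSeries.C l) (deltaSeq p l) := by
  have hC : HahnSeries.C l ≠ (0 : LaurentSeries ℂ) := (map_ne_zero _).2 hl
  have hpd : pd p ∘ (0 : ℤ → LaurentSeries ℂ) = 0 := funext fun _ => by simpa using pd_sub p 0 0
  have : CharZero (LaurentSeries ℂ) := charZero_of_injective_ringHom HahnSeries.C_injective
  exact isJordanChain_of_commutator lx_ne_zero hC (mul_ne_zero (inv_ne_zero lx_ne_zero) hp) hpd
    (twistedShiftSub_pd_comp p) (mul_ne_zero hC hp) (deltaSeq_zero p hl)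
    (fun j => (map_ne_zero _).2 (inv_ne_zero j.cast_add_one_ne_zero)) (deltaSeq_succ p)

end DeltaSeq

/-! ### Fields as linear maps into `W((z))` -/

section FieldSpace

open Module

lemma coeff_smul_eq_finsum {Γ R V : Type*} [AddCommGroup Γ] [PartialOrder Γ]
    [IsOrderedCancelAddMonoid Γ] [Semiring R] [AddCommMonoid V] [Module R V] (f : HahnSeries Γ R)
    (x : HahnModule Γ R V) (t : Γ) :
    ((HahnModule.of R).symm (f • x)).coeff t =
      ∑ᶠ s : Γ, f.coeff s • ((HahnModule.of R).symm x).coeff (t - s) := by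
  classical
  rw [HahnModule.coeff_smul]
  set S := Finset.VAddAntidiagonal t (Set.VAddAntidiagonal.finite_of_isPWO f.isPWO_support
    ((HahnModule.of R).symm x).isPWO_support t)
  have hmem (q : Γ × Γ) : q ∈ S ↔ f.coeff q.1 ≠ 0 ∧
      ((HahnModule.of R).symm x).coeff q.2 ≠ 0 ∧ q.1 + q.2 = t := by
    simp [S, Finset.mem_vaddAntidiagonal]
  have hsnd {q : Γ × Γ} (hq : q ∈ S) : q.2 = t - q.1 :=
    eq_sub_of_add_eq' ((hmem q).1 hq).2.2
  rw [finsum_eq_sum_of_support_subset (s := S.image Prod.fst), Finset.sum_image]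
  · exact Finset.sum_congr rfl fun q hq => by rw [hsnd hq]
  · exact fun q hq q' hq' h => Prod.ext h (by rw [hsnd hq, hsnd hq', h])
  · intro s hs
    rw [Finset.coe_image]
    exact ⟨(s, t - s), (hmem _).2 ⟨left_ne_zero_of_smul hs, right_ne_zero_of_smul hs,
      add_sub_cancel s t⟩, rfl⟩

variable {W : Type*} [AddCommGroup W] [Module ℂ W]

/-- The space of fields on `W`, viewed as linear maps `W → W((z))`; it is a vector space over
`ℂ((z))`. -/
abbrev FieldSpace (W : Type*) [AddCommGroup W] [Module ℂ W] := W →ₗ[ℂ] HahnModule ℤ ℂ W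

/-- The modes of a field: `mode x n` is the coefficient of `z^{-n-1}`. -/
def mode : FieldSpace W →ₗ[ℂ] ℤ → End ℂ W where
  toFun x n :=
    { toFun := fun w => ((HahnModule.of ℂ).symm (x w)).coeff (-n - 1)
      map_add' := by simp
      map_smul' := fun c w => by rw [map_smul]; rfl }
  map_add' _ _ := rfl
  map_smul' _ _ := rfl

lemma mode_apply (x : FieldSpace W) (n : ℤ) (w : W) :
    mode x n w = ((HahnModule.of ℂ).symm (x w)).coeff (-n - 1) := rfl

lemma mode_injective : Function.Injective (mode : FieldSpace W → ℤ → End ℂ W) := by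
  intro x y h
  ext w s
  simpa [mode_apply] using LinearMap.congr_fun (congrFun h (-s - 1)) w

lemma isFieldOn_mode (x : FieldSpace W) : IsFieldOn W (mode x) := fun w =>
  ⟨-((HahnModule.of ℂ).symm (x w)).order, fun _ hn =>
    HahnSeries.coeff_eq_zero_of_lt_order (by omega)⟩

lemma IsFieldOn.exists_mode_eq {a : ℤ → End ℂ W} (ha : IsFieldOn W a) :
    ∃ x : FieldSpace W, mode x = a := by
  have hbdd (w : W) : BddBelow (Function.support fun s => a (-s - 1) w) := by
    obtain ⟨N, hN⟩ := ha w
    refine ⟨-N, fun s hs => not_lt.1 fun h => hs (hN _ (by omega))⟩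
  refine ⟨
    { toFun := fun w => HahnModule.of ℂ (HahnSeries.ofSuppBddBelow _ (hbdd w))
      map_add' := fun v w => by ext; exact map_add (a _) v w
      map_smul' := fun c w => by ext; exact map_smul (a _) c w }, ?_⟩
  ext n w
  simp [mode_apply]

lemma mode_smul (f : LaurentSeries ℂ) (x : FieldSpace W) (n : ℤ) (w : W) :
    mode (f • x) n w = ∑ᶠ s : ℤ, f.coeff s • mode x (n + s) w := by
  rw [mode_apply, LinearMap.smul_apply, coeff_smul_eq_finsum]
  refine finsum_congr fun s => ?_
  rw [mode_apply, show -(n + s) - 1 = -n - 1 - s by ring]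

lemma mode_single_smul (s : ℤ) (c : ℂ) (x : FieldSpace W) (n : ℤ) :
    mode (HahnSeries.single s c • x) n = c • mode x (n + s) := by
  ext w
  rw [mode_smul, finsum_eq_single _ s fun t ht => by
    rw [HahnSeries.coeff_single_of_ne ht, zero_smul], HahnSeries.coeff_single_same,
    LinearMap.smul_apply]

/-- Multiplication by `q(z₁/z₂)` is `q(T)`. -/
lemma mode_aeval_twistedShift (q : Polynomial ℂ) (D : ℤ → FieldSpace W) (m n : ℤ) :
    mode (Polynomial.aeval (twistedShift (FieldSpace W) lx)
        (q.map (HahnSeries.C : ℂ →+* LaurentSeries ℂ)) D m) n =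
      ∑ t ∈ Finset.range (q.natDegree + 1), q.coeff t • mode (D (m + t)) (n - t) := by
  have hpow (t : ℕ) : (lx⁻¹ ^ t : LaurentSeries ℂ) = HahnSeries.single (-t : ℤ) 1 := by
    rw [lx_inv, HahnSeries.single_pow, one_pow, nsmul_eq_mul, mul_neg_one]
  rw [Polynomial.aeval_eq_sum_range, LinearMap.sum_apply, Finset.sum_apply, map_sum,
    Finset.sum_apply, Polynomial.natDegree_map]
  refine Finset.sum_congr rfl fun t _ => ?_
  rw [LinearMap.smul_apply, Pi.smul_apply, twistedShift_pow_apply, hpow, Polynomial.coeff_map,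
    HahnSeries.C_apply, mode_single_smul, add_zero, mode_single_smul, one_smul, sub_eq_add_neg]

lemma eq_iff_forall_mode_eq {D E : ℤ → FieldSpace W} :
    D = E ↔ ∀ m n, mode (D m) n = mode (E m) n := by
  simp_rw [funext_iff, ← mode_injective.eq_iff, funext_iff]

lemma aeval_twistedShift_eq_zero_iff_forall_sum_eq_zero {q : Polynomial ℂ}
    {D : ℤ → FieldSpace W} :
    Polynomial.aeval (twistedShift (FieldSpace W) lx)
        (q.map (HahnSeries.C : ℂ →+* LaurentSeries ℂ)) D = 0 ↔
      ∀ m n : ℤ, ∑ t ∈ Finset.range (q.natDegree + 1),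
        q.coeff t • mode (D (m + t)) (n - t) = 0 := by
  rw [eq_iff_forall_mode_eq]
  simp only [mode_aeval_twistedShift, Pi.zero_apply, map_zero]

variable {ι : Type*} [Fintype ι]

/-- The expansion `Σ_m z₁^{-m-1} D_m(z₂) = Σ_i Σ_{j<kᵢ} A_{ij}(z₂)(p∂)^{(j)}[p̄(λᵢ⁻¹z₁)δ(λᵢz₂/z₁)]`
of a sequence of fields `D_m(z) = Σ_n D_{m,n} z^{-n-1}`; `CommutatorIdentity` is the case of a
commutator. -/
def HasDeltaExpansion (p : LaurentSeries ℂ) (lam : ι → ℂ) (k : ι → ℕ)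
    (D : ℤ → ℤ → End ℂ W) (A : ι → ℕ → ℤ → End ℂ W) : Prop :=
  ∀ (m n : ℤ) (w : W), D m n w = ∑ i, ∑ j ∈ Finset.range (k i),
    ∑ᶠ s : ℤ, (pdPow p j (pbarDeltaCoeff p (lam i) (-m - 1))).coeff s • A i j (n + s) w

lemma hasDeltaExpansion_mode_iff {p : LaurentSeries ℂ} {lam : ι → ℂ} {k : ι → ℕ}
    {D : ℤ → FieldSpace W} {A : ι → ℕ → FieldSpace W} :
    HasDeltaExpansion p lam k (fun m => mode (D m)) (fun i j => mode (A i j)) ↔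
      ∑ i, ∑ j ∈ Finset.range (k i), seqSMul (deltaSeq p (lam i) j) (A i j) = D := by
  rw [eq_comm, eq_iff_forall_mode_eq]
  simp only [HasDeltaExpansion, LinearMap.ext_iff, Finset.sum_apply, map_sum, LinearMap.sum_apply,
    seqSMul_apply, mode_smul, deltaSeq]

lemma isFieldOn_commutator (a : ℤ → End ℂ W) {b : ℤ → End ℂ W} (hb : IsFieldOn W b) (m : ℤ) :
    IsFieldOn W (fun n => a m * b n - b n * a m) := by
  intro w
  obtain ⟨N, hN⟩ := hb w
  obtain ⟨N', hN'⟩ := hb (a m w)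
  refine ⟨max N N', fun n hn => ?_⟩
  simp [hN n (le_of_max_le_left hn), hN' n (le_of_max_le_right hn)]

end FieldSpace

theorem quasi_local_commutator_expansion_general
    {ι : Type*} [Fintype ι] (p : LaurentSeries ℂ) (hp : p ≠ 0)
    (W : Type*) [AddCommGroup W] [Module ℂ W]
    (D : ℤ → ℤ → Module.End ℂ W) (hD : ∀ m, IsFieldOn W (D m))
    (lam : ι → ℂ) (hne : ∀ i, lam i ≠ 0) (hinj : Function.Injective lam) (k : ι → ℕ)
    (q : Polynomial ℂ) (hq : q = ∏ i, (Polynomial.X - Polynomial.C (lam i)) ^ k i) :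
    ((∀ m n : ℤ, ∑ t ∈ Finset.range (q.natDegree + 1), q.coeff t • D (m + t) (n - t) = 0) ↔
      ∃ A : ι → ℕ → ℤ → Module.End ℂ W,
        (∀ i j, IsFieldOn W (A i j)) ∧ HasDeltaExpansion p lam k D A) ∧
    (∀ A A' : ι → ℕ → ℤ → Module.End ℂ W,
        (∀ i j, IsFieldOn W (A i j)) → (∀ i j, IsFieldOn W (A' i j)) →
        HasDeltaExpansion p lam k D A → HasDeltaExpansion p lam k D A' →
        ∀ i, ∀ j < k i, A i j = A' i j) := by
  choose F hF using fun m => (hD m).exists_mode_eq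
  obtain rfl : (fun m => mode (F m)) = D := funext hF
  have hchain i := isJordanChain_deltaSeq p hp (hne i)
  have hne' i : HahnSeries.C (lam i) ≠ (0 : LaurentSeries ℂ) := (map_ne_zero _).2 (hne i)
  have hinj' : Function.Injective fun i => (HahnSeries.C (lam i) : LaurentSeries ℂ) :=
    HahnSeries.C_injective.comp hinj
  refine ⟨?_, fun A A' hA hA' h h' => ?_⟩
  · have hmap : q.map (HahnSeries.C : ℂ →+* LaurentSeries ℂ) =
        ∏ i, (Polynomial.X - Polynomial.C (HahnSeries.C (lam i))) ^ k i := by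
      simp [hq, Polynomial.map_prod]
    rw [← aeval_twistedShift_eq_zero_iff_forall_sum_eq_zero, hmap,
      aeval_twistedShift_eq_zero_iff lx_ne_zero hne' hinj' hchain]
    constructor
    · rintro ⟨B, hB⟩
      exact ⟨fun i j => mode (B i j), fun i j => isFieldOn_mode _,
        hasDeltaExpansion_mode_iff.2 hB⟩
    · rintro ⟨A, hA, h⟩
      choose B hB using fun i j => (hA i j).exists_mode_eq
      obtain rfl : (fun i j => mode (B i j)) = A := funext₂ hB
      exact ⟨B, hasDeltaExpansion_mode_iff.1 h⟩
  · choose B hB using fun i j => (hA i j).exists_mode_eq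
    choose B' hB' using fun i j => (hA' i j).exists_mode_eq
    obtain rfl : (fun i j => mode (B i j)) = A := funext₂ hB
    obtain rfl : (fun i j => mode (B' i j)) = A' := funext₂ hB'
    rw [hasDeltaExpansion_mode_iff] at h h'
    intro i j hj
    exact congrArg _ (eq_of_sum_seqSMul_eq lx_ne_zero hne' hinj' hchain (h.trans h'.symm) i j hj)

/-- Lemma 2.4: for fields `a(z), b(z)` on `W` and
`q(z) = Π(z−λᵢ)^{kᵢ}` with `λᵢ` distinct and nonzero, one has
`q(z₁/z₂)[a(z₁),b(z₂)] = 0` (coefficientwise) if and only if there exist fields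
`A_{ij}(z)` with `[a(z₁),b(z₂)] = Σᵢⱼ A_{ij}(z₂)(p∂₂)^{(j)}[p̄(λᵢ⁻¹z₁)δ(λᵢz₂/z₁)]`;
moreover, the `A_{ij}` are uniquely determined. -/
theorem quasi_local_commutator_expansion
    (p : LaurentSeries ℂ) (hp : p ≠ 0)
    (W : Type*) [AddCommGroup W] [Module ℂ W]
    (a b : ℤ → Module.End ℂ W) (ha : IsFieldOn W a) (hb : IsFieldOn W b)
    (r : ℕ) (lam : Fin r → ℂ) (hne : ∀ i, lam i ≠ 0) (hinj : Function.Injective lam)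
    (k : Fin r → ℕ) (hk : ∀ i, 0 < k i) :
    ((∀ m n : ℤ,
        ∑ t ∈ Finset.range ((qpoly r lam k).natDegree + 1),
          (qpoly r lam k).coeff t • (a (m + t) * b (n - t) - b (n - t) * a (m + t)) = 0)
      ↔ ∃ A : Fin r → ℕ → ℤ → Module.End ℂ W,
          (∀ i j, IsFieldOn W (A i j)) ∧ CommutatorIdentity W p r lam k a b A) ∧
    (∀ A A' : Fin r → ℕ → ℤ → Module.End ℂ W,
        (∀ i j, IsFieldOn W (A i j)) → (∀ i j, IsFieldOn W (A' i j)) →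
        CommutatorIdentity W p r lam k a b A → CommutatorIdentity W p r lam k a b A' →
        ∀ i : Fin r, ∀ j < k i, A i j = A' i j) := by
  exact quasi_local_commutator_expansion_general p hp W (fun m n => a m * b n - b n * a m)
    (isFieldOn_commutator a hb) lam hne hinj k (qpoly r lam k) rfl
end
end

section
/- For all f, g ∈ ℂ((x)) and any nonzero p ∈ ℂ((x)), the following residue identity holds: Res_x( ((p′)²f′ + pp″f′ + 3pp′f″ + p²f‴)·g ) + (1/2)·Res_x( (pf′g − pfg′)·(2p″ − p^{−1}(p′)²) ) = Res_x( (p‴f + 3p″f′ + 3p′f″ + pf‴)·p·g ). -/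
/-!
Put `u = 2pp″ - (p′)²`, so that `u′ = 2pp‴` and `p(2p″ - p⁻¹(p′)²) = u`. The third order operators
`f ↦ p(pf)‴` and `f ↦ p⁻¹(p d/dx)³f` differ by the first order operator `f ↦ (1/2)u′f + uf′`, and
`(u′f + 2uf′)g - u(f′g - fg′)` is the exact derivative `(ufg)′`, whose residue vanishes.
-/

noncomputable section

open HahnSeries

section Differential

open scoped Differential

/-- A differential ring from an additive Leibniz map. The `ℤ`-algebra structure is that of an
abstract ring: on `LaurentSeries R`, instance search finds a different one, which factors through
power series and which `Differential` does not accept. -/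
abbrev differentialOfLeibniz {A : Type*} [CommRing A] (d : A →+ A)
    (leibniz : ∀ a b, d (a * b) = a * d b + b * d a) : Differential A where
  deriv := .mk' d.toIntLinearMap leibniz

variable {A : Type*} [CommRing A] [Differential A]

/-- The potential `u = 2pp″ - (p′)²`: the operator `f ↦ p(pf)‴` exceeds `f ↦ p⁻¹(p d/dx)³f` by
`f ↦ (1/2)u′f + uf′`. The scaling avoids a division by `2`. -/
def cocyclePotential (p : A) : A := 2 * (p * p′′) - p′ ^ 2

lemma deriv_cocyclePotential (p : A) : (cocyclePotential p)′ = 2 * (p * p′′′) := by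
  simp only [cocyclePotential, two_mul, sq, map_sub, map_add, Derivation.leibniz, smul_eq_mul]
  ring

lemma mul_two_mul_deriv_deriv_sub_eq_cocyclePotential (p : Aˣ) :
    p * (2 * (p : A)′′ - ↑p⁻¹ * (p : A)′ ^ 2) = cocyclePotential (p : A) := by
  rw [cocyclePotential, mul_sub, Units.mul_inv_cancel_left, mul_left_comm]

lemma two_mul_thirdOrder_eq_add_cocyclePotential (p f : A) :
    2 * ((p′′′ * f + 3 * (p′′ * f′) + 3 * (p′ * f′′) + p * f′′′) * p)
      = 2 * (p′ ^ 2 * f′ + p * p′′ * f′ + 3 * (p * p′ * f′′) + p ^ 2 * f′′′)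
        + ((cocyclePotential p)′ * f + 2 * cocyclePotential p * f′) := by
  rw [deriv_cocyclePotential, cocyclePotential]
  ring

variable {M : Type*} [AddCommGroup M]

lemma map_firstOrder_mul_eq (ρ : A →+ M) (hρ : ∀ a : A, ρ a′ = 0) (u f g : A) :
    ρ ((u′ * f + 2 * u * f′) * g) = ρ (u * (f′ * g - f * g′)) := by
  have exact_diff : (u′ * f + 2 * u * f′) * g - u * (f′ * g - f * g′) = (u * (f * g))′ := by
    simp only [Derivation.leibniz, smul_eq_mul]
    ring
  rw [← sub_eq_zero, ← map_sub, exact_diff, hρ]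

/-- Doubled, as `A` and `M` have no division by `2`. -/
theorem residue_identity_virasoro_general (ρ : A →+ M) (hρ : ∀ a : A, ρ a′ = 0) (p : Aˣ)
    (f g : A) :
    2 • ρ (((p : A)′ ^ 2 * f′ + p * (p : A)′′ * f′ + 3 * (p * (p : A)′ * f′′)
        + (p : A) ^ 2 * f′′′) * g)
      + ρ ((p * f′ * g - p * f * g′) * (2 * (p : A)′′ - ↑p⁻¹ * (p : A)′ ^ 2))
    = 2 • ρ (((p : A)′′′ * f + 3 * ((p : A)′′ * f′) + 3 * ((p : A)′ * f′′)
        + p * f′′′) * p * g) := by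
  have bracket_eq : (p * f′ * g - p * f * g′) * (2 * (p : A)′′ - ↑p⁻¹ * (p : A)′ ^ 2)
      = cocyclePotential (p : A) * (f′ * g - f * g′) := by
    rw [← mul_two_mul_deriv_deriv_sub_eq_cocyclePotential]
    ring
  rw [bracket_eq, ← map_firstOrder_mul_eq ρ hρ, ← map_nsmul, ← map_nsmul, ← map_add]
  refine congrArg ρ ?_
  linear_combination -g * two_mul_thirdOrder_eq_add_cocyclePotential (p : A) f

end Differential

section HahnSeries

variable {Γ R : Type*} [PartialOrder Γ]

/-- The operator on Hahn series that multiplies the coefficient in degree `n` by the weight `φ n`.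
For Laurent series and `φ n = n` it is the Euler operator `x d/dx`. -/
def weightOperator [MulZeroClass R] (φ : Γ → R) (f : HahnSeries Γ R) : HahnSeries Γ R where
  coeff n := φ n * f.coeff n
  isPWO_support' := f.isPWO_support.mono fun _ => right_ne_zero_of_mul

lemma support_weightOperator_subset [MulZeroClass R] (φ : Γ → R) (f : HahnSeries Γ R) :
    (weightOperator φ f).support ⊆ f.support :=
  fun _ => right_ne_zero_of_mul

lemma weightOperator_mul [AddCommMonoid Γ] [IsOrderedCancelAddMonoid Γ] [CommSemiring R]
    (φ : Γ →+ R) (f g : HahnSeries Γ R) :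
    weightOperator φ (f * g) = weightOperator φ f * g + f * weightOperator φ g := by
  ext n
  -- The smaller supports are enlarged so that all three products are sums over one antidiagonal.
  rw [coeff_add, coeff_mul_left' f.isPWO_support (support_weightOperator_subset φ f),
    coeff_mul_right' g.isPWO_support (support_weightOperator_subset φ g),
    ← Finset.sum_add_distrib]
  simp only [weightOperator, coeff_mul, Finset.mul_sum]
  refine Finset.sum_congr rfl fun ij hij => ?_
  have degree_eq : ij.1 + ij.2 = n := (Finset.mem_antidiagonal.mp hij).2.2
  rw [← degree_eq, map_add]
  ring

end HahnSeries

section LaurentSeries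

variable {R : Type*} [CommRing R]

lemma coeff_laurentDerivative (f : LaurentSeries R) (n : ℤ) :
    (LaurentSeries.derivative R f).coeff n = ((n + 1 : ℤ) : R) * f.coeff (n + 1) := by
  rw [LaurentSeries.derivative_apply, LaurentSeries.hasseDeriv_coeff, Nat.cast_one,
    Ring.choose_one_right, zsmul_eq_mul]

lemma laurentDerivative_eq_single_mul_weightOperator (f : LaurentSeries R) :
    LaurentSeries.derivative R f = single (-1) 1 * weightOperator (Int.castAddHom R) f := by
  ext n
  rw [coeff_laurentDerivative, coeff_single_mul, one_mul, sub_neg_eq_add]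
  rfl

lemma laurentDerivative_mul (f g : LaurentSeries R) :
    LaurentSeries.derivative R (f * g) =
      f * LaurentSeries.derivative R g + g * LaurentSeries.derivative R f := by
  simp only [laurentDerivative_eq_single_mul_weightOperator, weightOperator_mul]
  ring

/-- The differential ring of Laurent series with the formal derivative `d/dx`. -/
instance instDifferentialLaurentSeries : Differential (LaurentSeries R) :=
  differentialOfLeibniz (LaurentSeries.derivative R (V := R)).toAddMonoidHom laurentDerivative_mul

open scoped Differential

lemma coeff_deriv_laurentSeries (f : LaurentSeries R) (n : ℤ) :
    (f′).coeff n = ((n + 1 : ℤ) : R) * f.coeff (n + 1) :=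
  coeff_laurentDerivative f n

lemma coeff_neg_one_deriv_laurentSeries (f : LaurentSeries R) : (f′).coeff (-1) = 0 := by
  rw [coeff_deriv_laurentSeries, neg_add_cancel, Int.cast_zero, zero_mul]

lemma lder_eq_deriv (f : LaurentSeries ℂ) : lder f = f′ := by
  ext n
  exact (coeff_deriv_laurentSeries f n).symm

end LaurentSeries

/-- the central-term residue identity behind Lemma 6.5:
`Res(((p′)²f′ + pp″f′ + 3pp′f″ + p²f‴)g) + (1/2)Res((pf′g − pfg′)(2p″ − p⁻¹(p′)²))
  = Res((p‴f + 3p″f′ + 3p′f″ + pf‴)·p·g)`. -/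
theorem residue_identity_virasoro (p : LaurentSeries ℂ) (hp : p ≠ 0)
    (f g : LaurentSeries ℂ) :
    lres ((((lder p) ^ 2) * lder f + p * lder (lder p) * lder f
        + 3 * (p * lder p * lder (lder f)) + p ^ 2 * lder (lder (lder f))) * g)
      + (1 / 2 : ℂ) * lres ((p * lder f * g - p * f * lder g)
          * (2 * lder (lder p) - p⁻¹ * (lder p) ^ 2))
    = lres ((lder (lder (lder p)) * f + 3 * (lder (lder p) * lder f)
        + 3 * (lder p * lder (lder f)) + p * lder (lder (lder f))) * p * g) := by
  have doubled := residue_identity_virasoro_general (coeff.addMonoidHom (-1 : ℤ))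
    coeff_neg_one_deriv_laurentSeries (Units.mk0 p hp) f g
  simp only [← lder_eq_deriv, Units.val_mk0, Units.val_inv_eq_inv_val, nsmul_eq_mul, Nat.cast_ofNat,
    coeff.addMonoidHom_apply] at doubled
  unfold lres
  linear_combination (1 / 2 : ℂ) * doubled
end
end
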